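/- arXiv:2405.03143 — 2 statements merged into one kernel-verified Lean document; each statement's English description precedes it below -/
import Mathlib

section
/- For every γ ∈ (1,2) and every k ∈ ℤ, (1/(2π)) · ∫_{−π}^{π} (1 + (γ/24)(2 − 2 cos θ)) · (2 − 2 cos θ)^{γ/2} · cos(kθ) dθ = s_k^{(γ)}, i.e. the s_k^{(γ)} are exactly the Fourier coefficients of the generating function S_γ(θ) = (1 + (γ/24)(2 − 2 cos θ))(2 − 2 cos θ)^{γ/2}. -/
open Real

/-- The fourth-order coefficients `s_k^{(γ)}`. -/
noncomputable def sCoef (γ : ℝ) (k : ℤ) : ℝ :=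
  ((-1 : ℝ) ^ k * Real.Gamma (γ + 1) /
      (Real.Gamma (γ / 2 - k + 1) * Real.Gamma (γ / 2 + k + 1))) *
    (1 + γ * (γ + 1) * (γ + 2) / (6 * (γ - 2 * k + 2) * (γ + 2 * k + 2)))


lemma beta_real (u v : ℝ) (hu : 0 < u) (hv : 0 < v) :
    ∫ x in (0:ℝ)..1, x ^ (u - 1) * (1 - x) ^ (v - 1) =
      Real.Gamma u * Real.Gamma v / Real.Gamma (u + v) := by
  have h := Complex.betaIntegral_eq_Gamma_mul_div (u : ℂ) (v : ℂ) (by simpa) (by simpa)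
  rw [← Complex.ofReal_add, Complex.Gamma_ofReal, Complex.Gamma_ofReal, Complex.Gamma_ofReal,
    Complex.betaIntegral] at h
  apply Complex.ofReal_injective
  rw [← intervalIntegral.integral_ofReal]
  push_cast
  rw [← h]
  apply intervalIntegral.integral_congr
  intro x hx
  rw [Set.uIcc_of_le zero_le_one] at hx
  have h1 : (0:ℝ) ≤ 1 - x := by linarith [hx.2]
  simp only
  rw [Complex.ofReal_cpow hx.1, Complex.ofReal_cpow h1]
  push_cast
  rfl

lemma w_nonneg (θ : ℝ) : 0 ≤ 2 - 2 * Real.cos θ := by linarith [Real.cos_le_one θ]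

lemma w_cont (a : ℝ) (ha : 0 < a) : Continuous fun θ : ℝ => (2 - 2 * Real.cos θ) ^ a :=
  (by fun_prop : Continuous fun θ : ℝ => (2 - 2 * Real.cos θ)).rpow_const
    (fun _ => Or.inr ha.le)

lemma half_int (a : ℝ) (ha : 0 < a) :
    ∫ θ in (0:ℝ)..π, (2 - 2 * Real.cos θ) ^ a =
      (4:ℝ) ^ a * (Real.Gamma (a + 1 / 2) * Real.Gamma (1 / 2) / Real.Gamma (a + 1)) := by
  have hb := beta_real (a + 1/2) (1/2) (by linarith) (by norm_num)
  have hs := intervalIntegral.integral_comp_mul_deriv_of_deriv_nonneg (a := 0) (b := π)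
    (f := fun θ => (1 - Real.cos θ) / 2) (f' := fun θ => Real.sin θ / 2)
    (g := fun x : ℝ => x ^ (a + 1/2 - 1) * (1 - x) ^ ((1/2 : ℝ) - 1))
    (by fun_prop)
    (by
      intro x _
      have := ((Real.hasDerivAt_cos x).const_sub 1).div_const 2
      simpa using this)
    (by
      intro x hx
      rw [min_eq_left pi_pos.le, max_eq_right pi_pos.le] at hx
      have := Real.sin_pos_of_mem_Ioo hx
      positivity)
  have e1 : (1 - Real.cos 0) / 2 = 0 := by simp
  have e2 : (1 - Real.cos π) / 2 = 1 := by norm_num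
  simp only [e1, e2] at hs
  rw [hb] at hs
  have e3 : a + 1/2 + 1/2 = a + 1 := by ring
  rw [e3] at hs
  rw [← hs, ← intervalIntegral.integral_const_mul]
  apply intervalIntegral.integral_congr_ae
  have hpi : ∀ᵐ θ : ℝ, θ ≠ π := by simp [MeasureTheory.ae_iff]
  filter_upwards [hpi] with θ hθ hm
  rw [Set.uIoc_of_le pi_pos.le] at hm
  have hm' : θ ∈ Set.Ioo 0 π := ⟨hm.1, lt_of_le_of_ne hm.2 hθ⟩
  have hsin := Real.sin_pos_of_mem_Ioo hm'
  have hsq := Real.sin_sq_add_cos_sq θ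
  set t := (1 - Real.cos θ) / 2 with ht
  have hc : Real.cos θ = 1 - 2 * t := by rw [ht]; ring
  have ht0 : 0 < t := by nlinarith [Real.cos_le_one θ, Real.neg_one_le_cos θ]
  have ht1 : 0 < 1 - t := by nlinarith [Real.cos_le_one θ, Real.neg_one_le_cos θ]
  have hss : Real.sin θ / 2 = t ^ (1/2 : ℝ) * (1 - t) ^ (1/2 : ℝ) := by
    rw [← Real.mul_rpow ht0.le ht1.le, ← Real.sqrt_eq_rpow]
    symm
    rw [Real.sqrt_eq_iff_mul_self_eq (by positivity) (by positivity)]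
    rw [hc] at hsq
    nlinarith
  simp only [Function.comp]
  rw [← ht, hss, hc]
  have e4 : 2 - 2 * (1 - 2 * t) = 4 * t := by ring
  rw [e4, Real.mul_rpow (by norm_num) ht0.le]
  have e5 : t ^ (a + 1/2 - 1) * (1 - t) ^ ((1/2 : ℝ) - 1) *
      (t ^ (1/2 : ℝ) * (1 - t) ^ (1/2 : ℝ)) =
      (t ^ (a + 1/2 - 1) * t ^ (1/2 : ℝ)) * ((1 - t) ^ ((1/2 : ℝ) - 1) * (1 - t) ^ (1/2 : ℝ)) := by
    ring
  rw [e5, ← Real.rpow_add ht0, ← Real.rpow_add ht1]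
  have e6 : a + 1/2 - 1 + 1/2 = a := by ring
  have e7 : (1/2 : ℝ) - 1 + 1/2 = 0 := by ring
  rw [e6, e7, Real.rpow_zero, mul_one]

lemma c_zero (a : ℝ) (ha : 0 < a) :
    ∫ θ in (-π)..π, (2 - 2 * Real.cos θ) ^ a =
      2 * π * (Real.Gamma (2 * a + 1) / (Real.Gamma (a + 1) * Real.Gamma (a + 1))) := by
  have hc := w_cont a ha
  rw [← intervalIntegral.integral_add_adjacent_intervals (b := 0)
    (hc.intervalIntegrable _ _) (hc.intervalIntegrable _ _)]
  have hn : ∫ θ in (-π)..0, (2 - 2 * Real.cos θ) ^ a =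
      ∫ θ in (0:ℝ)..π, (2 - 2 * Real.cos θ) ^ a := by
    have := intervalIntegral.integral_comp_neg (a := 0) (b := π)
      (fun θ : ℝ => (2 - 2 * Real.cos θ) ^ a)
    simp only [Real.cos_neg, neg_zero] at this
    exact this.symm
  rw [hn, half_int a ha, Real.Gamma_one_half_eq]
  have hd := Real.Gamma_mul_Gamma_add_half (a + 1/2)
  have e1 : a + 1/2 + 1/2 = a + 1 := by ring
  have e2 : 2 * (a + 1/2) = 2 * a + 1 := by ring
  rw [e1, e2] at hd
  have e3 : (1:ℝ) - (2 * a + 1) = - (2 * a) := by ring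
  have e4 : (2:ℝ) ^ (-(2 * a)) = ((4:ℝ) ^ a)⁻¹ := by
    rw [Real.rpow_neg (by norm_num), Real.rpow_mul (by norm_num)]
    norm_num
  rw [e3, e4] at hd
  have h4 : (0:ℝ) < (4:ℝ) ^ a := by positivity
  have hg : 0 < Real.Gamma (a + 1) := Real.Gamma_pos_of_pos (by linarith)
  have hp : √π * √π = π := Real.mul_self_sqrt pi_pos.le
  have hd' : Real.Gamma (a + 1/2) = Real.Gamma (2 * a + 1) * ((4:ℝ) ^ a)⁻¹ * √π
      / Real.Gamma (a + 1) := by rw [← hd]; field_simp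
  rw [hd']
  field_simp
  rw [Real.sq_sqrt pi_pos.le]
  ring

lemma c_rec (a : ℝ) (ha : 0 < a) (n : ℕ) :
    (a + n + 1) * ∫ θ in (-π)..π, (2 - 2 * Real.cos θ) ^ a * Real.cos (((n:ℝ) + 1) * θ) =
      (n - a) * ∫ θ in (-π)..π, (2 - 2 * Real.cos θ) ^ a * Real.cos ((n:ℝ) * θ) := by
  have hc := w_cont a ha
  have hi : ∀ m : ℝ, Continuous fun θ : ℝ => (2 - 2 * Real.cos θ) ^ a * Real.cos (m * θ) :=
    fun m => hc.mul (by fun_prop)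
  rw [← sub_eq_zero, ← intervalIntegral.integral_const_mul, ← intervalIntegral.integral_const_mul,
    ← intervalIntegral.integral_sub (((hi _).const_mul _).intervalIntegrable _ _)
      (((hi _).const_mul _).intervalIntegrable _ _)]
  rw [MeasureTheory.integral_eq_of_hasDerivAt_off_countable_of_le
    (fun θ : ℝ => (2 - 2 * Real.cos θ) ^ a * (Real.sin (((n:ℝ) + 1) * θ) - Real.sin ((n:ℝ) * θ)))
    _ (by linarith [pi_pos]) (Set.countable_singleton (0:ℝ))]
  · have h1 : Real.sin (((n:ℝ) + 1) * π) = 0 := by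
      have := Real.sin_nat_mul_pi (n + 1)
      push_cast at this
      exact this
    simp [h1, Real.sin_nat_mul_pi]
  · exact (hc.mul (by fun_prop)).continuousOn
  · rintro θ ⟨hθ, hθ0⟩
    have hs : Real.sin (θ / 2) ≠ 0 := by
      intro h
      rw [Real.sin_eq_zero_iff_of_lt_of_lt (by linarith [hθ.1, pi_pos])
        (by linarith [hθ.2, pi_pos])] at h
      exact hθ0 (by simpa using (by linarith : θ = 0))
    set x := θ / 2 with hx
    have hθx : θ = 2 * x := by rw [hx]; ring
    have hw : 2 - 2 * Real.cos θ = 4 * Real.sin x ^ 2 := by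
      rw [hθx, Real.cos_two_mul, Real.cos_sq']; ring
    have hwp : 2 - 2 * Real.cos θ ≠ 0 := by rw [hw]; positivity
    have d1 : HasDerivAt (fun θ : ℝ => 2 - 2 * Real.cos θ) (2 * Real.sin θ) θ := by
      have := ((Real.hasDerivAt_cos θ).const_mul 2).const_sub 2
      simpa using this
    have d2 := d1.rpow_const (p := a) (Or.inl hwp)
    have d3 : ∀ m : ℝ, HasDerivAt (fun θ : ℝ => Real.sin (m * θ)) (m * Real.cos (m * θ)) θ := by
      intro m
      have := (((hasDerivAt_id θ).const_mul m)).sin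
      simpa [mul_comm] using this
    have d4 := d2.mul ((d3 ((n:ℝ) + 1)).sub (d3 n))
    refine d4.congr_deriv ?_
    rw [Real.rpow_sub_one hwp]
    set y := ((n:ℝ) + 1/2) * θ with hy
    have a1 : ((n:ℝ) + 1) * θ = y + x := by rw [hy, hx]; ring
    have a2 : (n:ℝ) * θ = y - x := by rw [hy, hx]; ring
    have hsθ : Real.sin θ = 2 * Real.sin x * Real.cos x := by rw [hθx, Real.sin_two_mul]
    simp only [Pi.sub_apply]
    rw [a1, a2, hsθ, hw, Real.sin_add, Real.sin_sub, Real.cos_add, Real.cos_sub]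
    field_simp
    ring
  · exact ((((hi _).const_mul _).sub ((hi _).const_mul _))).intervalIntegrable _ _

lemma c_nat (a : ℝ) (ha : 0 < a) (hz : ∀ n : ℤ, a ≠ n) (n : ℕ) :
    ∫ θ in (-π)..π, (2 - 2 * Real.cos θ) ^ a * Real.cos ((n:ℝ) * θ) =
      2 * π * ((-1) ^ n * Real.Gamma (2 * a + 1) /
        (Real.Gamma (a - n + 1) * Real.Gamma (a + n + 1))) := by
  induction n with
  | zero => simpa using c_zero a ha
  | succ n ih =>
    have h := c_rec a ha n
    rw [ih] at h
    have h1 : a + n + 1 ≠ 0 := by positivity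
    have h2 : a - n ≠ 0 := by
      have := hz n
      push_cast at this
      exact sub_ne_zero.mpr this
    have g1 : Real.Gamma (a - n + 1) = (a - n) * Real.Gamma (a - n) := Real.Gamma_add_one h2
    have g2 : Real.Gamma (a + n + 1 + 1) = (a + n + 1) * Real.Gamma (a + n + 1) :=
      Real.Gamma_add_one h1
    have n1 : Real.Gamma (a - n) ≠ 0 := by
      apply Real.Gamma_ne_zero
      intro m hm
      apply hz (n - m)
      push_cast
      linarith
    have n2 : Real.Gamma (a + n + 1) ≠ 0 := (Real.Gamma_pos_of_pos (by positivity)).ne'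
    push_cast
    have e1 : a - ((n:ℝ) + 1) + 1 = a - n := by ring
    have e2 : a + ((n:ℝ) + 1) + 1 = a + n + 1 + 1 := by ring
    rw [e1, e2, g2]
    rw [g1] at h
    apply mul_left_cancel₀ h1
    rw [h, pow_succ]
    field_simp
    ring

lemma c_int (a : ℝ) (ha : 0 < a) (hz : ∀ n : ℤ, a ≠ n) (k : ℤ) :
    ∫ θ in (-π)..π, (2 - 2 * Real.cos θ) ^ a * Real.cos ((k:ℝ) * θ) =
      2 * π * ((-1) ^ k * Real.Gamma (2 * a + 1) /
        (Real.Gamma (a - k + 1) * Real.Gamma (a + k + 1))) := by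
  obtain ⟨n, rfl | rfl⟩ := k.eq_nat_or_neg
  · simpa using c_nat a ha hz n
  · have h := c_nat a ha hz n
    have e : ((-1:ℝ) ^ n)⁻¹ = (-1) ^ n := by
      rw [← inv_pow]; norm_num
    simp only [Int.cast_neg, Int.cast_natCast, neg_mul, Real.cos_neg, zpow_neg, zpow_natCast, e,
      sub_neg_eq_add, ← sub_eq_add_neg]
    rw [h, mul_comm (Real.Gamma (a - n + 1))]

theorem stmt_5 (γ : ℝ) (hγ : γ ∈ Set.Ioo (1 : ℝ) 2) (k : ℤ) :
    (1 / (2 * π)) *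
        ∫ θ in (-π)..π,
          (1 + γ / 24 * (2 - 2 * Real.cos θ)) * (2 - 2 * Real.cos θ) ^ (γ / 2) *
            Real.cos ((k : ℝ) * θ)
      = sCoef γ k := by
  obtain ⟨h1, h2⟩ := hγ
  have hz : ∀ n : ℤ, γ / 2 ≠ n := by
    intro n hn
    have l1 : (0:ℝ) < n := by linarith
    have l2 : (n:ℝ) < 1 := by linarith
    have l1' : 0 < n := by exact_mod_cast l1
    have l2' : n < 1 := by exact_mod_cast l2
    omega
  have hz' : ∀ n : ℤ, γ / 2 + 1 ≠ n := by
    intro n hn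
    apply hz (n - 1)
    push_cast
    linarith
  have c1 := c_int (γ / 2) (by linarith) hz k
  have c2 := c_int (γ / 2 + 1) (by linarith) hz' k
  have hi : ∀ a : ℝ, 0 < a →
      Continuous fun θ : ℝ => (2 - 2 * Real.cos θ) ^ a * Real.cos (k * θ) :=
    fun a ha => (w_cont a ha).mul (by fun_prop)
  have hI : ∫ θ in (-π)..π,
          (1 + γ / 24 * (2 - 2 * Real.cos θ)) * (2 - 2 * Real.cos θ) ^ (γ / 2) *
            Real.cos ((k : ℝ) * θ) =
      (∫ θ in (-π)..π, (2 - 2 * Real.cos θ) ^ (γ / 2) * Real.cos ((k:ℝ) * θ)) +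
      γ / 24 * ∫ θ in (-π)..π, (2 - 2 * Real.cos θ) ^ (γ / 2 + 1) * Real.cos ((k:ℝ) * θ) := by
    rw [← intervalIntegral.integral_const_mul, ← intervalIntegral.integral_add
      ((hi _ (by linarith)).intervalIntegrable _ _)
      (((hi _ (by linarith)).const_mul _).intervalIntegrable _ _)]
    apply intervalIntegral.integral_congr
    intro θ _
    simp only
    rw [Real.rpow_add_one' (w_nonneg θ) (by linarith)]
    ring
  rw [hI, c1, c2, sCoef]
  have p1 : γ / 2 - k + 1 ≠ 0 := by
    intro h
    apply hz (k - 1)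
    push_cast
    linarith
  have p2 : γ / 2 + k + 1 ≠ 0 := by
    intro h
    apply hz (-k - 1)
    push_cast
    linarith
  have n1 : Real.Gamma (γ / 2 - k + 1) ≠ 0 := by
    apply Real.Gamma_ne_zero
    intro m hm
    apply hz (k - 1 - m)
    push_cast
    linarith
  have n2 : Real.Gamma (γ / 2 + k + 1) ≠ 0 := by
    apply Real.Gamma_ne_zero
    intro m hm
    apply hz (-k - 1 - m)
    push_cast
    linarith
  have e1 : γ / 2 + 1 - k + 1 = γ / 2 - k + 1 + 1 := by ring
  have e2 : γ / 2 + 1 + k + 1 = γ / 2 + k + 1 + 1 := by ring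
  have e3 : 2 * (γ / 2 + 1) + 1 = γ + 1 + 1 + 1 := by ring
  have e4 : 2 * (γ / 2) + 1 = γ + 1 := by ring
  rw [e1, e2, e3, e4, Real.Gamma_add_one p1, Real.Gamma_add_one p2,
    Real.Gamma_add_one (by linarith : γ + 1 + 1 ≠ 0), Real.Gamma_add_one (by linarith : γ + 1 ≠ 0)]
  have q1 : γ - 2 * k + 2 = 2 * (γ / 2 - k + 1) := by ring
  have q2 : γ + 2 * k + 2 = 2 * (γ / 2 + k + 1) := by ring
  rw [q1, q2]
  generalize γ / 2 - k + 1 = P at *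
  generalize γ / 2 + k + 1 = Q at *
  have := pi_pos.ne'
  field_simp
  ring
end

section
/- For every γ ∈ (1,2) and every N ≥ 1, the N×N real symmetric Toeplitz matrix A_γ with (i,j) entry s_{i−j}^{(γ)} is positive definite. -/
open Matrix

/-- The `N×N` symmetric Toeplitz matrix `A_γ` with `(i,j)` entry `s_{i-j}^{(γ)}`. -/
noncomputable def Amat (γ : ℝ) (N : ℕ) : Matrix (Fin N) (Fin N) ℝ :=
  fun i j => sCoef γ ((i : ℤ) - (j : ℤ))

/-- The second order (fractional centered difference) coefficients. -/
noncomputable def gCoef (γ : ℝ) (k : ℤ) : ℝ :=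
  (-1 : ℝ) ^ k * Real.Gamma (γ + 1) /
      (Real.Gamma (γ / 2 - k + 1) * Real.Gamma (γ / 2 + k + 1))

lemma int_ne_half (γ : ℝ) (hγ : γ ∈ Set.Ioo (1 : ℝ) 2) (k : ℤ) : γ / 2 - k ≠ 0 := by
  obtain ⟨h1, h2⟩ := hγ
  intro h
  have h3 : (0 : ℝ) < k := by linarith
  have h4 : (k : ℝ) < 1 := by linarith
  have h5 : 0 < k := by exact_mod_cast h3
  have h6 : k < 1 := by exact_mod_cast h4
  omega

lemma gCoef_symm (γ : ℝ) (k : ℤ) : gCoef γ (-k) = gCoef γ k := by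
  unfold gCoef
  have : (-1 : ℝ) ^ (-k) = (-1 : ℝ) ^ k := by
    rw [_root_.zpow_neg, ← _root_.inv_zpow]; norm_num
  rw [this, mul_comm (Real.Gamma (γ / 2 - k + 1))]
  push_cast
  simp only [sub_neg_eq_add, ← sub_eq_add_neg]

lemma gCoef_rec (γ : ℝ) (hγ : γ ∈ Set.Ioo (1 : ℝ) 2) (k : ℤ) :
    gCoef γ (k + 1) * (k + 1 + γ / 2) = gCoef γ k * (k - γ / 2) := by
  have h1 := int_ne_half γ hγ k
  have h2 : γ / 2 + k + 1 ≠ 0 := by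
    have := int_ne_half γ hγ (-k - 1)
    push_cast at this
    intro h; apply this; linarith
  unfold gCoef
  rw [zpow_add_one₀ (by norm_num)]
  push_cast
  have e1 : γ / 2 - (k + 1 : ℝ) + 1 = γ / 2 - k := by ring
  have e2 : γ / 2 + (k + 1 : ℝ) + 1 = (γ / 2 + k + 1) + 1 := by ring
  rw [e1, e2, Real.Gamma_add_one h1, Real.Gamma_add_one h2]
  rw [div_mul_eq_mul_div, div_mul_eq_mul_div]
  have e3 : (-1 : ℝ) ^ k * -1 * Real.Gamma (γ + 1) * (k + 1 + γ / 2) =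
    ((γ / 2 + k + 1)) * (-((-1 : ℝ) ^ k * Real.Gamma (γ + 1))) := by ring
  have e4 : Real.Gamma (γ / 2 - k) * ((γ / 2 + k + 1) * Real.Gamma (γ / 2 + k + 1)) =
    (γ / 2 + k + 1) * (Real.Gamma (γ / 2 - k) * Real.Gamma (γ / 2 + k + 1)) := by ring
  have e5 : (-1 : ℝ) ^ k * Real.Gamma (γ + 1) * (k - γ / 2) =
    (γ / 2 - k) * (-((-1 : ℝ) ^ k * Real.Gamma (γ + 1))) := by ring
  rw [e3, e4, e5, mul_assoc (γ / 2 - k : ℝ), mul_div_mul_left _ _ h1, mul_div_mul_left _ _ h2]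

lemma gCoef_zero_pos (γ : ℝ) (hγ : γ ∈ Set.Ioo (1 : ℝ) 2) : 0 < gCoef γ 0 := by
  obtain ⟨h1, h2⟩ := hγ
  unfold gCoef
  have a := Real.Gamma_pos_of_pos (s := γ + 1) (by linarith)
  have b := Real.Gamma_pos_of_pos (s := γ / 2 + 1) (by linarith)
  simp
  positivity

lemma gCoef_neg_nat (γ : ℝ) (hγ : γ ∈ Set.Ioo (1 : ℝ) 2) (n : ℕ) :
    gCoef γ ((n : ℤ) + 1) < 0 := by
  induction n with
  | zero =>
    have h := gCoef_rec γ hγ 0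
    have h0 := gCoef_zero_pos γ hγ
    obtain ⟨h1, h2⟩ := hγ
    push_cast at h ⊢
    nlinarith
  | succ n ih =>
    have h := gCoef_rec γ hγ (n + 1)
    obtain ⟨h1, h2⟩ := hγ
    push_cast at h ⊢
    have hn : (0 : ℝ) ≤ n := n.cast_nonneg
    have h3 : gCoef γ (n + 1) * (n + 1 - γ / 2) < 0 :=
      mul_neg_of_neg_of_pos ih (by linarith)
    rw [← h] at h3
    by_contra! hc
    have := mul_nonneg hc (show (0 : ℝ) ≤ n + 1 + 1 + γ / 2 by linarith)
    linarith

lemma gCoef_neg (γ : ℝ) (hγ : γ ∈ Set.Ioo (1 : ℝ) 2) (k : ℤ) (hk : k ≠ 0) :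
    gCoef γ k < 0 := by
  rcases lt_or_gt_of_ne hk with h | h
  · have := gCoef_neg_nat γ hγ (-k - 1).toNat
    rw [Int.toNat_of_nonneg (by omega)] at this
    rw [← gCoef_symm]
    simpa using this
  · have := gCoef_neg_nat γ hγ (k - 1).toNat
    rw [Int.toNat_of_nonneg (by omega)] at this
    simpa using this

/-- `2β` times a row sum, by telescoping. -/
lemma rowsum_eq (γ : ℝ) (hγ : γ ∈ Set.Ioo (1 : ℝ) 2) (i : ℤ) (N : ℕ) :
    γ * ∑ j ∈ Finset.range N, gCoef γ (i - j) =
      gCoef γ (i - N) * ((i - N : ℤ) - γ / 2) - gCoef γ i * (i - γ / 2) := by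
  induction N with
  | zero => simp
  | succ N ih =>
    rw [Finset.sum_range_succ, mul_add, ih]
    have h := gCoef_rec γ hγ (i - N - 1)
    rw [sub_add_cancel] at h
    push_cast at h ⊢
    rw [← sub_sub]
    linear_combination h

lemma rowsum_pos (γ : ℝ) (hγ : γ ∈ Set.Ioo (1 : ℝ) 2) (i N : ℕ) (hi : i < N) :
    0 < ∑ j ∈ Finset.range N, gCoef γ ((i : ℤ) - j) := by
  have h := rowsum_eq γ hγ i N
  have a : gCoef γ i * (i - γ / 2) < 0 := by
    rcases Nat.eq_zero_or_pos i with h0 | h0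
    · subst h0
      have := gCoef_zero_pos γ hγ
      obtain ⟨h1, h2⟩ := hγ
      push_cast
      nlinarith
    · have := gCoef_neg γ hγ i (by omega)
      obtain ⟨h1, h2⟩ := hγ
      have : (1 : ℝ) ≤ i := by exact_mod_cast h0
      apply mul_neg_of_neg_of_pos <;> linarith
  have b : 0 < gCoef γ (i - N) * ((i - N : ℤ) - γ / 2) := by
    have := gCoef_neg γ hγ (i - N) (by omega)
    obtain ⟨h1, h2⟩ := hγ
    have : (i : ℝ) + 1 ≤ N := by exact_mod_cast hi
    push_cast
    apply mul_pos_of_neg_of_neg <;> linarith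
  obtain ⟨h1, h2⟩ := hγ
  have c : 0 < γ * ∑ j ∈ Finset.range N, gCoef γ ((i : ℤ) - j) := by
    rw [h]; push_cast at a b ⊢; linarith
  exact pos_of_mul_pos_right c (by linarith)

/-- Diagonal dominance bound. -/
lemma quad_ge (γ : ℝ) (hγ : γ ∈ Set.Ioo (1 : ℝ) 2) (N : ℕ) (x : ℕ → ℝ) :
    ∑ i ∈ Finset.range N, (∑ j ∈ Finset.range N, gCoef γ ((i : ℤ) - j)) * x i ^ 2 ≤
    ∑ i ∈ Finset.range N, (∑ j ∈ Finset.range N, gCoef γ ((i : ℤ) - j) * x j) * x i := by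
  have h1 : ∑ i ∈ Finset.range N, ∑ j ∈ Finset.range N,
      gCoef γ ((i : ℤ) - j) * (x i - x j) ^ 2 ≤ 0 := by
    refine Finset.sum_nonpos fun i _ => Finset.sum_nonpos fun j _ => ?_
    by_cases hij : i = j
    · subst hij; simp
    · have := gCoef_neg γ hγ ((i : ℤ) - j) (by omega)
      exact mul_nonpos_of_nonpos_of_nonneg this.le (sq_nonneg _)
  have h2 : ∑ i ∈ Finset.range N, ∑ j ∈ Finset.range N, gCoef γ ((i : ℤ) - j) * x j ^ 2 =
      ∑ i ∈ Finset.range N, ∑ j ∈ Finset.range N, gCoef γ ((i : ℤ) - j) * x i ^ 2 := by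
    rw [Finset.sum_comm]
    refine Finset.sum_congr rfl fun i _ => Finset.sum_congr rfl fun j _ => ?_
    rw [← gCoef_symm]; simp
  have h3 : ∑ i ∈ Finset.range N, ∑ j ∈ Finset.range N,
      gCoef γ ((i : ℤ) - j) * (x i - x j) ^ 2 =
      ∑ i ∈ Finset.range N, ∑ j ∈ Finset.range N, gCoef γ ((i : ℤ) - j) * x i ^ 2 +
      ∑ i ∈ Finset.range N, ∑ j ∈ Finset.range N, gCoef γ ((i : ℤ) - j) * x j ^ 2 -
      2 * ∑ i ∈ Finset.range N, ∑ j ∈ Finset.range N, gCoef γ ((i : ℤ) - j) * x j * x i := by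
    simp only [Finset.mul_sum, ← Finset.sum_add_distrib, ← Finset.sum_sub_distrib]
    refine Finset.sum_congr rfl fun i _ => Finset.sum_congr rfl fun j _ => ?_
    ring
  simp only [Finset.sum_mul]
  linarith

lemma quad_nonneg (γ : ℝ) (hγ : γ ∈ Set.Ioo (1 : ℝ) 2) (N : ℕ) (x : ℕ → ℝ) :
    0 ≤ ∑ i ∈ Finset.range N, (∑ j ∈ Finset.range N, gCoef γ ((i : ℤ) - j) * x j) * x i := by
  refine le_trans (Finset.sum_nonneg fun i hi => ?_) (quad_ge γ hγ N x)
  exact mul_nonneg (rowsum_pos γ hγ i N (Finset.mem_range.1 hi)).le (sq_nonneg _)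

lemma quad_pos (γ : ℝ) (hγ : γ ∈ Set.Ioo (1 : ℝ) 2) (N : ℕ) (x : ℕ → ℝ)
    (hx : ∃ i < N, x i ≠ 0) :
    0 < ∑ i ∈ Finset.range N, (∑ j ∈ Finset.range N, gCoef γ ((i : ℤ) - j) * x j) * x i := by
  refine lt_of_lt_of_le (Finset.sum_pos' (fun i hi => ?_) ?_) (quad_ge γ hγ N x)
  · exact mul_nonneg (rowsum_pos γ hγ i N (Finset.mem_range.1 hi)).le (sq_nonneg _)
  · obtain ⟨i, hi, h⟩ := hx
    exact ⟨i, Finset.mem_range.2 hi, mul_pos (rowsum_pos γ hγ i N hi) (by positivity)⟩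

/-- Backward difference with zero boundary value. -/
def bdiff (x : ℕ → ℝ) : ℕ → ℝ
  | 0 => x 0
  | n + 1 => x (n + 1) - x n

lemma sum_bdiff (c x : ℕ → ℝ) (N : ℕ) :
    ∑ i ∈ Finset.range (N + 1), c i * bdiff x i =
      ∑ i ∈ Finset.range N, (c i - c (i + 1)) * x i + c N * x N := by
  induction N with
  | zero => simp [bdiff]
  | succ N ih =>
    rw [Finset.sum_range_succ, ih, Finset.sum_range_succ]
    simp only [bdiff]
    ring

lemma quad2_nonneg (γ : ℝ) (hγ : γ ∈ Set.Ioo (1 : ℝ) 2) (N : ℕ) (x : ℕ → ℝ) (hx : x N = 0) :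
    0 ≤ ∑ i ∈ Finset.range N, (∑ j ∈ Finset.range N,
      (2 * gCoef γ ((i : ℤ) - j) - gCoef γ ((i : ℤ) - j - 1) - gCoef γ ((i : ℤ) - j + 1)) * x j)
        * x i := by
  have h := quad_nonneg γ hγ (N + 1) (bdiff x)
  rw [sum_bdiff (fun i => ∑ j ∈ Finset.range (N + 1), gCoef γ ((i : ℤ) - j) * bdiff x j), hx,
    mul_zero, add_zero] at h
  refine h.trans_eq (Finset.sum_congr rfl fun i _ => ?_)
  have key : ∀ i : ℕ, ∑ j ∈ Finset.range (N + 1), gCoef γ ((i : ℤ) - j) * bdiff x j =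
      ∑ j ∈ Finset.range N, (gCoef γ ((i : ℤ) - j) - gCoef γ ((i : ℤ) - (j + 1 : ℕ))) * x j := by
    intro i
    rw [sum_bdiff (fun j => gCoef γ ((i : ℤ) - j)), hx, mul_zero, add_zero]
  simp only [key, ← Finset.sum_sub_distrib]
  congr 1
  refine Finset.sum_congr rfl fun j _ => ?_
  have e1 : (i : ℤ) - ((j + 1 : ℕ) : ℤ) = i - j - 1 := by push_cast; ring
  have e2 : ((i + 1 : ℕ) : ℤ) - (j : ℤ) = i - j + 1 := by push_cast; ring
  have e3 : ((i + 1 : ℕ) : ℤ) - ((j + 1 : ℕ) : ℤ) = i - j := by push_cast; ring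
  rw [e1, e2, e3]
  ring

lemma sCoef_eq (γ : ℝ) (hγ : γ ∈ Set.Ioo (1 : ℝ) 2) (k : ℤ) :
    sCoef γ k = gCoef γ k +
      γ / 24 * (2 * gCoef γ k - gCoef γ (k - 1) - gCoef γ (k + 1)) := by
  have r1 := gCoef_rec γ hγ k
  have r2 := gCoef_rec γ hγ (k - 1)
  rw [sub_add_cancel] at r2
  have n1 : γ + 2 * k + 2 ≠ 0 := by
    have := int_ne_half γ hγ (-k - 1)
    push_cast at this
    intro h; apply this; linarith
  have n2 : γ - 2 * k + 2 ≠ 0 := by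
    have := int_ne_half γ hγ (k - 1)
    push_cast at this
    intro h; apply this; linarith
  have s : sCoef γ k = gCoef γ k *
    (1 + γ * (γ + 1) * (γ + 2) / (6 * (γ - 2 * k + 2) * (γ + 2 * k + 2))) := rfl
  push_cast at r2
  have q1 : gCoef γ (k + 1) = gCoef γ k * (2 * k - γ) / (γ + 2 * k + 2) := by
    rw [eq_div_iff n1]; linear_combination 2 * r1
  have q2 : gCoef γ (k - 1) = - gCoef γ k * (2 * k + γ) / (γ - 2 * k + 2) := by
    rw [eq_div_iff n2]; linear_combination 2 * r2
  rw [s, q1, q2]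
  field_simp
  ring

lemma sCoef_symm (γ : ℝ) (hγ : γ ∈ Set.Ioo (1 : ℝ) 2) (k : ℤ) : sCoef γ (-k) = sCoef γ k := by
  rw [sCoef_eq γ hγ, sCoef_eq γ hγ, gCoef_symm, ← gCoef_symm γ (-k - 1), ← gCoef_symm γ (-k + 1)]
  have e1 : -(-k - 1) = k + 1 := by ring
  have e2 : -(-k + 1) = k - 1 := by ring
  rw [e1, e2]; ring

theorem stmt_9 (γ : ℝ) (hγ : γ ∈ Set.Ioo (1 : ℝ) 2) (N : ℕ) (hN : 1 ≤ N) :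
    (Amat γ N).IsSymm ∧ (Amat γ N).PosDef := by
  have hs : (Amat γ N).IsSymm := by
    ext i j
    simp only [Matrix.transpose_apply, Amat]
    rw [← sCoef_symm γ hγ]
    congr 1
    ring
  refine ⟨hs, Matrix.PosDef.of_dotProduct_mulVec_pos ?_ ?_⟩
  · rw [Matrix.IsHermitian, Matrix.conjTranspose_eq_transpose_of_trivial]; exact hs
  · intro x hx
    let X : ℕ → ℝ := fun i => if h : i < N then x ⟨i, h⟩ else 0
    have hX : ∀ i : Fin N, X i = x i := fun i => by simp [X]
    have hXN : X N = 0 := by simp [X]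
    have e : star x ⬝ᵥ (Amat γ N *ᵥ x) = ∑ i ∈ Finset.range N,
        (∑ j ∈ Finset.range N, sCoef γ ((i : ℤ) - j) * X j) * X i := by
      simp only [Finset.sum_range, hX]
      simp only [dotProduct, Matrix.mulVec, Amat, star_trivial]
      exact Finset.sum_congr rfl fun i _ => mul_comm _ _
    rw [e]
    have p := quad_pos γ hγ N X (by
      by_contra! hc
      apply hx
      ext i
      rw [← hX i]
      exact hc i i.2)
    have q := quad2_nonneg γ hγ N X hXN
    have q' := mul_nonneg (show 0 ≤ γ / 24 by linarith [hγ.1]) q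
    refine lt_of_lt_of_eq (add_pos_of_pos_of_nonneg p q') ?_
    simp only [Finset.mul_sum, Finset.sum_mul, ← Finset.sum_add_distrib]
    refine Finset.sum_congr rfl fun i _ => Finset.sum_congr rfl fun j _ => ?_
    rw [sCoef_eq γ hγ]
    ring
end
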